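/- arXiv:2207.02047 — 2 statements merged into one kernel-verified Lean document; each statement's English description precedes it below -/
import Mathlib

section
/- Let f = x⁴ + y⁴ + z⁴ + x·y²·z² in ℂ[x,y,z], and let J₁ be the ideal of ℂ[[x,y,z]] generated by the images of the twelve polynomials x·f, y·f, z·f, f − x·∂f/∂x, x·∂f/∂y, x·∂f/∂z, y·∂f/∂x, f − y·∂f/∂y, y·∂f/∂z, z·∂f/∂x, z·∂f/∂y, f − z·∂f/∂z. Then the image of f in ℂ[[x,y,z]] does not belong to J₁. -/
open MvPolynomial

/-- The canonical ring homomorphism `ℂ[x,y,z] → ℂ[[x,y,z]]`. -/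
noncomputable def ι : MvPolynomial (Fin 3) ℂ →+* MvPowerSeries (Fin 3) ℂ :=
  MvPolynomial.coeToMvPowerSeries.ringHom

/-- The polynomial `f = x⁴ + y⁴ + z⁴ + x·y²·z²` in `ℂ[x,y,z]`. -/
noncomputable def f : MvPolynomial (Fin 3) ℂ :=
  X 0 ^ 4 + X 1 ^ 4 + X 2 ^ 4 + X 0 * X 1 ^ 2 * X 2 ^ 2

/-- The ideal `J₁` of `ℂ[[x,y,z]]` generated by the images of
`x·f, y·f, z·f` and `δ_{ij}·f − xᵢ·(∂f/∂xⱼ)` for `i, j = 1, 2, 3`. -/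
noncomputable def J₁ : Ideal (MvPowerSeries (Fin 3) ℂ) :=
  Ideal.span
    { ι (X 0 * f), ι (X 1 * f), ι (X 2 * f),
      ι (f - X 0 * pderiv 0 f), ι (X 0 * pderiv 1 f), ι (X 0 * pderiv 2 f),
      ι (X 1 * pderiv 0 f), ι (f - X 1 * pderiv 1 f), ι (X 1 * pderiv 2 f),
      ι (X 2 * pderiv 0 f), ι (X 2 * pderiv 1 f), ι (f - X 2 * pderiv 2 f) }

/-- The exponent `(a,b,c)`. -/
noncomputable def ex (a b c : ℕ) : Fin 3 →₀ ℕ := Finsupp.equivFunOnFinite.symm ![a, b, c]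

/-- The monomial with exponent `(a,b,c)` as a power series. -/
noncomputable def mo (a b c : ℕ) : MvPowerSeries (Fin 3) ℂ := MvPowerSeries.monomial (ex a b c) 1

lemma ex_le (a b c i j k : ℕ) : ex i j k ≤ ex a b c ↔ i ≤ a ∧ j ≤ b ∧ k ≤ c := by
  rw [Finsupp.le_def]
  simp [Fin.forall_fin_succ, ex]

lemma ex_sub (a b c i j k : ℕ) : ex a b c - ex i j k = ex (a - i) (b - j) (c - k) := by
  ext t
  fin_cases t <;> simp [ex]

lemma coeff_mo (g : MvPowerSeries (Fin 3) ℂ) (a b c i j k : ℕ) :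
    MvPowerSeries.coeff (ex a b c) (g * mo i j k) =
      if i ≤ a ∧ j ≤ b ∧ k ≤ c then MvPowerSeries.coeff (ex (a - i) (b - j) (c - k)) g else 0 := by
  classical
  rw [mo, MvPowerSeries.coeff_mul_monomial]
  simp only [ex_le, ex_sub, mul_one]

lemma iota_mo (i j k : ℕ) : ι (X 0 ^ i * X 1 ^ j * X 2 ^ k) = mo i j k := by
  have h : (X 0 ^ i * X 1 ^ j * X 2 ^ k : MvPolynomial (Fin 3) ℂ) = monomial (ex i j k) 1 := by
    rw [X_pow_eq_monomial, X_pow_eq_monomial, X_pow_eq_monomial, monomial_mul, monomial_mul]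
    have e : Finsupp.single 0 i + Finsupp.single 1 j + Finsupp.single 2 k = ex i j k := by
      ext t
      fin_cases t <;> simp [ex]
    rw [e, one_mul, one_mul]
  rw [h, mo, ι, MvPolynomial.coeToMvPowerSeries.ringHom_apply, MvPolynomial.coe_monomial]

/-- The functional separating `f` from `J₁`. -/
noncomputable def sepL (p : MvPowerSeries (Fin 3) ℂ) : ℂ :=
  2 * MvPowerSeries.coeff (ex 4 0 0) p + 3 * MvPowerSeries.coeff (ex 0 4 0) p
    + 3 * MvPowerSeries.coeff (ex 0 0 4) p - 4 * MvPowerSeries.coeff (ex 1 2 2) p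

lemma sepL_add (p q) : sepL (p + q) = sepL p + sepL q := by
  simp only [sepL, map_add]; ring

lemma sepL_sub (p q) : sepL (p - q) = sepL p - sepL q := by
  simp only [sepL, map_sub]; ring

lemma sepL_two (p) : sepL (2 * p) = 2 * sepL p := by rw [two_mul, two_mul, sepL_add]

lemma sepL_four (p) : sepL (4 * p) = 4 * sepL p := by
  rw [show 4 * p = 2 * (2 * p) by ring, sepL_two, sepL_two]; ring

lemma mo_mul (a b c i j k : ℕ) : mo a b c * mo i j k = mo (a + i) (b + j) (c + k) := by
  simp only [← iota_mo, ← map_mul]; congr 1; ring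

lemma iX0 : ι (X 0) = mo 1 0 0 := by simp [← iota_mo]
lemma iX1 : ι (X 1) = mo 0 1 0 := by simp [← iota_mo]
lemma iX2 : ι (X 2) = mo 0 0 1 := by simp [← iota_mo]

lemma i_f : ι f = mo 4 0 0 + mo 0 4 0 + mo 0 0 4 + mo 1 2 2 := by
  have e : f = X 0 ^ 4 * X 1 ^ 0 * X 2 ^ 0 + X 0 ^ 0 * X 1 ^ 4 * X 2 ^ 0
      + X 0 ^ 0 * X 1 ^ 0 * X 2 ^ 4 + X 0 ^ 1 * X 1 ^ 2 * X 2 ^ 2 := by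
    unfold f; ring
  rw [e]
  simp only [map_add, iota_mo]

lemma i_f0 : ι (pderiv 0 f) = 4 * mo 3 0 0 + mo 0 2 2 := by
  rw [show pderiv 0 f = 4 * (X 0 ^ 3 * X 1 ^ 0 * X 2 ^ 0) + X 0 ^ 0 * X 1 ^ 2 * X 2 ^ 2 by
    simp [f, pderiv_X, Derivation.leibniz, Derivation.leibniz_pow]; try ring]
  simp only [map_add, map_mul ι 4, iota_mo, map_ofNat]

lemma i_f1 : ι (pderiv 1 f) = 4 * mo 0 3 0 + 2 * mo 1 1 2 := by
  rw [show pderiv 1 f = 4 * (X 0 ^ 0 * X 1 ^ 3 * X 2 ^ 0) + 2 * (X 0 ^ 1 * X 1 ^ 1 * X 2 ^ 2) by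
    simp [f, pderiv_X, Derivation.leibniz, Derivation.leibniz_pow]; try ring]
  simp only [map_add, map_mul ι 4, map_mul ι 2, iota_mo, map_ofNat]

lemma i_f2 : ι (pderiv 2 f) = 4 * mo 0 0 3 + 2 * mo 1 2 1 := by
  rw [show pderiv 2 f = 4 * (X 0 ^ 0 * X 1 ^ 0 * X 2 ^ 3) + 2 * (X 0 ^ 1 * X 1 ^ 2 * X 2 ^ 1) by
    simp [f, pderiv_X, Derivation.leibniz, Derivation.leibniz_pow]; try ring]
  simp only [map_add, map_mul ι 4, map_mul ι 2, iota_mo, map_ofNat]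

lemma sepL_J (p : MvPowerSeries (Fin 3) ℂ) (hp : p ∈ J₁) : sepL p = 0 := by
  refine Submodule.span_induction (p := fun p _ => ∀ g, sepL (g * p) = 0) ?_ ?_ ?_ ?_ hp 1 |>
    fun h => by simpa using h
  · intro q hq g
    simp only [Set.mem_insert_iff, Set.mem_singleton_iff, map_mul, map_sub,
      iX0, iX1, iX2, i_f, i_f0, i_f1, i_f2, mul_add, mul_left_comm _ (4 : MvPowerSeries (Fin 3) ℂ),
      mul_left_comm _ (2 : MvPowerSeries (Fin 3) ℂ), mo_mul] at hq
    rcases hq with rfl | rfl | rfl | rfl | rfl | rfl | rfl | rfl | rfl | rfl | rfl | rfl <;>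
    · simp only [mul_add, mul_sub, mul_left_comm _ (4 : MvPowerSeries (Fin 3) ℂ),
        mul_left_comm _ (2 : MvPowerSeries (Fin 3) ℂ), sepL_add, sepL_sub, sepL_two, sepL_four]
      simp [sepL, coeff_mo]
      try ring
  · intro g
    simp [sepL]
  · intro a b _ _ ha hb g
    rw [mul_add, sepL_add, ha, hb, add_zero]
  · intro a b _ hb g
    rw [smul_eq_mul, ← mul_assoc, hb]

theorem stmt_7 : ι f ∉ J₁ := by
  intro h
  have h := sepL_J _ h
  have e0 : ex 0 0 0 = 0 := by ext t; fin_cases t <;> simp [ex]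
  rw [i_f, ← one_mul (_ + _)] at h
  simp only [mul_add, sepL_add] at h
  simp only [sepL, coeff_mo] at h
  norm_num [e0] at h
end

section
/- Let f = x⁴ + y⁴ + z⁴ + x·y²·z² in ℂ[x,y,z], and let J₁ be the ideal of ℂ[[x,y,z]] generated by the images of the twelve polynomials x·f, y·f, z·f, f − x·∂f/∂x, x·∂f/∂y, x·∂f/∂z, y·∂f/∂x, f − y·∂f/∂y, y·∂f/∂z, z·∂f/∂x, z·∂f/∂y, f − z·∂f/∂z. Then the image of the monomial x·y²·z² in ℂ[[x,y,z]] does not belong to J₁. -/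
open MvPolynomial

/-- The exponent `(a, b, c)`. -/
noncomputable def expo (a b c : ℕ) : Fin 3 →₀ ℕ :=
  Finsupp.single 0 a + Finsupp.single 1 b + Finsupp.single 2 c

/-- The monomial `x^a y^b z^c` as a power series. -/
noncomputable def mono3 (a b c : ℕ) : MvPowerSeries (Fin 3) ℂ :=
  MvPowerSeries.monomial (expo a b c) 1

lemma expo_le (a b c a' b' c' : ℕ) :
    expo a b c ≤ expo a' b' c' ↔ a ≤ a' ∧ b ≤ b' ∧ c ≤ c' := by
  rw [Finsupp.le_def, Fin.forall_fin_succ, Fin.forall_fin_succ, Fin.forall_fin_succ]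
  simp [expo]

lemma expo_sub (a b c a' b' c' : ℕ) :
    expo a' b' c' - expo a b c = expo (a' - a) (b' - b) (c' - c) := by
  ext i
  fin_cases i <;> simp [expo]

lemma coeff_mono3 (g : MvPowerSeries (Fin 3) ℂ) (a b c a' b' c' : ℕ) :
    MvPowerSeries.coeff (expo a' b' c') (g * mono3 a b c) =
      if a ≤ a' ∧ b ≤ b' ∧ c ≤ c' then
        MvPowerSeries.coeff (expo (a' - a) (b' - b) (c' - c)) g else 0 := by
  classical
  rw [mono3, MvPowerSeries.coeff_mul_monomial, expo_sub]
  simp [expo_le]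

lemma iota_mono (a b c : ℕ) :
    ι (X 0 ^ a * X 1 ^ b * X 2 ^ c) = mono3 a b c := by
  simp [ι, mono3, expo, MvPowerSeries.X_pow_eq, MvPowerSeries.monomial_mul_monomial]

/-- A functional vanishing on `J₁` but not on `x y² z²`. -/
noncomputable def phi : MvPowerSeries (Fin 3) ℂ →ₗ[ℂ] ℂ :=
  (4 : ℂ) • MvPowerSeries.coeff (expo 1 2 2) - (2 : ℂ) • MvPowerSeries.coeff (expo 4 0 0)
    - (3 : ℂ) • MvPowerSeries.coeff (expo 0 4 0) - (3 : ℂ) • MvPowerSeries.coeff (expo 0 0 4)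

lemma phi_mul (g : MvPowerSeries (Fin 3) ℂ) (a b c : ℕ) :
    phi (g * ι (X 0 ^ a * X 1 ^ b * X 2 ^ c)) =
      4 * (if a ≤ 1 ∧ b ≤ 2 ∧ c ≤ 2 then
        MvPowerSeries.coeff (expo (1 - a) (2 - b) (2 - c)) g else 0)
      - 2 * (if a ≤ 4 ∧ b ≤ 0 ∧ c ≤ 0 then
        MvPowerSeries.coeff (expo (4 - a) (0 - b) (0 - c)) g else 0)
      - 3 * (if a ≤ 0 ∧ b ≤ 4 ∧ c ≤ 0 then
        MvPowerSeries.coeff (expo (0 - a) (4 - b) (0 - c)) g else 0)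
      - 3 * (if a ≤ 0 ∧ b ≤ 0 ∧ c ≤ 4 then
        MvPowerSeries.coeff (expo (0 - a) (0 - b) (4 - c)) g else 0) := by
  rw [iota_mono]
  simp only [phi, LinearMap.sub_apply, LinearMap.smul_apply, coeff_mono3, smul_eq_mul]

/-- Linear combinations of four monomials. -/
lemma phi_comb (g : MvPowerSeries (Fin 3) ℂ) (p q r s : MvPolynomial (Fin 3) ℂ)
    (k l m n : ℂ) : phi (g * ι (k • p + l • q + m • r + n • s)) =
      k * phi (g * ι p) + l * phi (g * ι q) + m * phi (g * ι r) + n * phi (g * ι s) := by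
  have h : ∀ (k : ℂ) (p : MvPolynomial (Fin 3) ℂ), ι (k • p) = k • ι p := by
    intro k p
    simp [ι]
  simp only [map_add, h, mul_add, mul_smul_comm, map_smul, smul_eq_mul]

/-- The standard monomial in polynomial form. -/
noncomputable abbrev M (a b c : ℕ) : MvPolynomial (Fin 3) ℂ := X 0 ^ a * X 1 ^ b * X 2 ^ c

lemma pd0 : pderiv 0 f = 4 * X 0 ^ 3 + X 1 ^ 2 * X 2 ^ 2 := by
  simp [f, pderiv_X, Pi.single_apply]
  try ring

lemma pd1 : pderiv 1 f = 4 * X 1 ^ 3 + 2 * X 0 * X 1 * X 2 ^ 2 := by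
  simp [f, pderiv_X, Pi.single_apply]
  try ring

lemma pd2 : pderiv 2 f = 4 * X 2 ^ 3 + 2 * X 0 * X 1 ^ 2 * X 2 := by
  simp [f, pderiv_X, Pi.single_apply]
  try ring

lemma phi_gen (g : MvPowerSeries (Fin 3) ℂ) {p : MvPolynomial (Fin 3) ℂ}
    (k l m n : ℂ) (a b c d : ℕ × ℕ × ℕ)
    (hp : p = k • M a.1 a.2.1 a.2.2 + l • M b.1 b.2.1 b.2.2 + m • M c.1 c.2.1 c.2.2
      + n • M d.1 d.2.1 d.2.2)
    (h : k * phi (g * ι (M a.1 a.2.1 a.2.2)) + l * phi (g * ι (M b.1 b.2.1 b.2.2))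
      + m * phi (g * ι (M c.1 c.2.1 c.2.2)) + n * phi (g * ι (M d.1 d.2.1 d.2.2)) = 0) :
    phi (g * ι p) = 0 := by
  rw [hp, phi_comb, h]

theorem stmt_8 : ι (X 0 * X 1 ^ 2 * X 2 ^ 2) ∉ J₁ := by
  intro hmem
  have key : ∀ q ∈ J₁, ∀ g, phi (g * q) = 0 := by
    intro q hq
    induction hq using Submodule.span_induction with
    | zero => simp
    | add u v _ _ hu hv => intro g; rw [mul_add, map_add, hu, hv, add_zero]
    | smul r u _ hu => intro g; rw [smul_eq_mul, ← mul_assoc]; exact hu _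
    | mem u hu =>
      intro g
      simp only [Set.mem_insert_iff, Set.mem_singleton_iff, pd0, pd1, pd2] at hu
      rcases hu with rfl | rfl | rfl | rfl | rfl | rfl | rfl | rfl | rfl | rfl | rfl | rfl
      · refine phi_gen g (1) (1) (1) (1) (5, 0, 0) (1, 4, 0) (1, 0, 4) (2, 2, 2) ?_ ?_
        · simp only [f, M, smul_eq_C_mul, map_neg, map_ofNat, map_one, map_zero]; ring
        · simp only [M, phi_mul]; norm_num; try ring
      · refine phi_gen g (1) (1) (1) (1) (4, 1, 0) (0, 5, 0) (0, 1, 4) (1, 3, 2) ?_ ?_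
        · simp only [f, M, smul_eq_C_mul, map_neg, map_ofNat, map_one, map_zero]; ring
        · simp only [M, phi_mul]; norm_num; try ring
      · refine phi_gen g (1) (1) (1) (1) (4, 0, 1) (0, 4, 1) (0, 0, 5) (1, 2, 3) ?_ ?_
        · simp only [f, M, smul_eq_C_mul, map_neg, map_ofNat, map_one, map_zero]; ring
        · simp only [M, phi_mul]; norm_num; try ring
      · refine phi_gen g (-3) (1) (1) (0) (4, 0, 0) (0, 4, 0) (0, 0, 4) (1, 2, 2) ?_ ?_
        · simp only [f, M, smul_eq_C_mul, map_neg, map_ofNat, map_one, map_zero]; ring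
        · simp only [M, phi_mul]; norm_num; try ring
      · refine phi_gen g (4) (2) (0) (0) (1, 3, 0) (2, 1, 2) (9, 9, 9) (9, 9, 9) ?_ ?_
        · simp only [f, M, smul_eq_C_mul, map_neg, map_ofNat, map_one, map_zero]; ring
        · simp only [M, phi_mul]; norm_num; try ring
      · refine phi_gen g (4) (2) (0) (0) (1, 0, 3) (2, 2, 1) (9, 9, 9) (9, 9, 9) ?_ ?_
        · simp only [f, M, smul_eq_C_mul, map_neg, map_ofNat, map_one, map_zero]; ring
        · simp only [M, phi_mul]; norm_num; try ring
      · refine phi_gen g (4) (1) (0) (0) (3, 1, 0) (0, 3, 2) (9, 9, 9) (9, 9, 9) ?_ ?_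
        · simp only [f, M, smul_eq_C_mul, map_neg, map_ofNat, map_one, map_zero]; ring
        · simp only [M, phi_mul]; norm_num; try ring
      · refine phi_gen g (1) (-3) (1) (-1) (4, 0, 0) (0, 4, 0) (0, 0, 4) (1, 2, 2) ?_ ?_
        · simp only [f, M, smul_eq_C_mul, map_neg, map_ofNat, map_one, map_zero]; ring
        · simp only [M, phi_mul]; norm_num; try ring
      · refine phi_gen g (4) (2) (0) (0) (0, 1, 3) (1, 3, 1) (9, 9, 9) (9, 9, 9) ?_ ?_
        · simp only [f, M, smul_eq_C_mul, map_neg, map_ofNat, map_one, map_zero]; ring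
        · simp only [M, phi_mul]; norm_num; try ring
      · refine phi_gen g (4) (1) (0) (0) (3, 0, 1) (0, 2, 3) (9, 9, 9) (9, 9, 9) ?_ ?_
        · simp only [f, M, smul_eq_C_mul, map_neg, map_ofNat, map_one, map_zero]; ring
        · simp only [M, phi_mul]; norm_num; try ring
      · refine phi_gen g (4) (2) (0) (0) (0, 3, 1) (1, 1, 3) (9, 9, 9) (9, 9, 9) ?_ ?_
        · simp only [f, M, smul_eq_C_mul, map_neg, map_ofNat, map_one, map_zero]; ring
        · simp only [M, phi_mul]; norm_num; try ring
      · refine phi_gen g (1) (1) (-3) (-1) (4, 0, 0) (0, 4, 0) (0, 0, 4) (1, 2, 2) ?_ ?_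
        · simp only [f, M, smul_eq_C_mul, map_neg, map_ofNat, map_one, map_zero]; ring
        · simp only [M, phi_mul]; norm_num; try ring
  have h := key _ hmem 1
  have e : (X 0 * X 1 ^ 2 * X 2 ^ 2 : MvPolynomial (Fin 3) ℂ) = X 0 ^ 1 * X 1 ^ 2 * X 2 ^ 2 := by
    ring
  rw [e, phi_mul] at h
  norm_num [expo] at h
end
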